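/- arXiv:1609.08935 — 2 statements merged into one kernel-verified Lean document; each statement's English description precedes it below -/
import Mathlib

section
/- For any linear locally repairable code of length n, dimension k, minimum distance d, and locality r, the minimum distance satisfies d ≤ n - k - ⌈k/r⌉ + 2. -/
/-! A codeword vanishing on a set `S` has weight at most `n - |S|`, so one looks for a large `S` on
which some nonzero codeword vanishes. Write `C_S` for the codewords of `C` vanishing on `S`, and
`φ(S) = dim C_S + |S|`. Each extra vanishing condition costs at most one dimension, so `φ` is
monotone. A dual codeword of weight at most `r + 1` with `i` in its support makes the condition at
`i` follow from at most `r` others; adding its whole support to `S` (with `i ∉ S`) therefore raises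
`φ` by at least one while lowering `dim C_S` by at most `r`. As long as `t * r < k` this can be
done `t` times, after which `φ(S) ≥ k + t` and `C_S ≠ 0`. Enlarging `S` until `|S| = k + t - 1`
keeps `C_S ≠ 0` by monotonicity. Finally take `t = ⌈k / r⌉ - 1`. -/

open Finset Module

section Shortening

variable {K ι : Type*} [DivisionRing K]

/-- The shortening of the code `C` at the coordinate set `S`: the codewords of `C` vanishing on
`S`. The coordinates in `S` are kept rather than deleted, so that shortenings at different sets
are subspaces of the same space. -/
def shortening (C : Submodule K (ι → K)) (S : Finset ι) : Submodule K (ι → K) :=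
  C ⊓ Submodule.pi S fun _ => ⊥

theorem mem_shortening {C : Submodule K (ι → K)} {S : Finset ι} {x : ι → K} :
    x ∈ shortening C S ↔ x ∈ C ∧ ∀ i ∈ S, x i = 0 := by
  simp [shortening, Submodule.mem_pi]

theorem shortening_empty (C : Submodule K (ι → K)) : shortening C ∅ = C := by
  ext x
  simp [mem_shortening]

theorem shortening_univ [Fintype ι] (C : Submodule K (ι → K)) : shortening C univ = ⊥ :=
  (Submodule.eq_bot_iff _).mpr fun _ hx =>
    funext fun i => (mem_shortening.mp hx).2 i (mem_univ i)

theorem shortening_shortening [DecidableEq ι] (C : Submodule K (ι → K)) (S T : Finset ι) :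
    shortening (shortening C S) T = shortening C (S ∪ T) := by
  ext x
  simp only [mem_shortening, forall_mem_union, and_assoc]

theorem finrank_le_finrank_shortening_add_card [Finite ι] (C : Submodule K (ι → K))
    (S : Finset ι) : finrank K C ≤ finrank K (shortening C S) + #S := by
  let restrict : C →ₗ[K] S → K := LinearMap.funLeft K K Subtype.val ∘ₗ C.subtype
  have ker_restrict : (LinearMap.ker restrict).map C.subtype = shortening C S := by
    rw [LinearMap.ker_comp, Submodule.map_comap_subtype]
    ext x
    simp [mem_shortening, funext_iff, LinearMap.funLeft_apply]
  calc finrank K C = finrank K (LinearMap.range restrict) + finrank K (LinearMap.ker restrict) :=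
        restrict.finrank_range_add_finrank_ker.symm
    _ ≤ #S + finrank K (shortening C S) := by
        rw [← ker_restrict, Submodule.finrank_map_subtype_eq]
        gcongr
        simpa using (LinearMap.range restrict).finrank_le
    _ = finrank K (shortening C S) + #S := add_comm _ _

theorem monotone_finrank_shortening_add_card [Finite ι] (C : Submodule K (ι → K)) :
    Monotone fun S : Finset ι => finrank K (shortening C S) + #S := by
  classical
  intro S T hST
  have h := finrank_le_finrank_shortening_add_card (shortening C S) (T \ S)
  rw [shortening_shortening, union_sdiff_of_subset hST] at h
  have hcard := card_sdiff_add_card_eq_card hST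
  dsimp only
  omega

theorem hammingNorm_add_card_le [Fintype ι] [DecidableEq K] {C : Submodule K (ι → K)}
    {S : Finset ι} {x : ι → K} (hx : x ∈ shortening C S) :
    hammingNorm x + #S ≤ Fintype.card ι := by
  classical
  have hdisj : Disjoint (univ.filter fun i => x i ≠ 0) S :=
    disjoint_left.mpr fun i hi hiS => (mem_filter.mp hi).2 ((mem_shortening.mp hx).2 i hiS)
  rw [hammingNorm, ← card_union_of_disjoint hdisj]
  exact card_le_univ _

theorem exists_hammingNorm_add_finrank_shortening_add_card_le [Fintype ι] [DecidableEq K]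
    {C : Submodule K (ι → K)} {S : Finset ι} (hS : shortening C S ≠ ⊥) :
    ∃ x ∈ C, x ≠ 0 ∧
      hammingNorm x + (finrank K (shortening C S) + #S) ≤ Fintype.card ι + 1 := by
  have hpos : 1 ≤ finrank K (shortening C S) := Submodule.one_le_finrank_iff.mpr hS
  have hle : finrank K (shortening C S) + #S ≤ Fintype.card ι := by
    have h := monotone_finrank_shortening_add_card C (subset_univ S)
    dsimp only at h
    rwa [shortening_univ, finrank_bot, zero_add, card_univ] at h
  obtain ⟨T, hST, -, hT⟩ := exists_subsuperset_card_eq (subset_univ S)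
    (show #S ≤ finrank K (shortening C S) + #S - 1 by omega) (by rw [card_univ]; omega)
  have hmono : finrank K (shortening C S) + #S ≤ finrank K (shortening C T) + #T :=
    monotone_finrank_shortening_add_card C hST
  have hT_ne : shortening C T ≠ ⊥ := Submodule.one_le_finrank_iff.mp (by omega)
  obtain ⟨x, hx, hx0⟩ := Submodule.exists_mem_ne_zero_of_ne_bot hT_ne
  have hweight := hammingNorm_add_card_le hx
  exact ⟨x, (mem_shortening.mp hx).1, hx0, by omega⟩

end Shortening

section Locality

variable {K ι : Type*} [DivisionRing K] [Fintype ι] {C : Submodule K (ι → K)}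

theorem shortening_insert_eq_of_dual [DecidableEq ι] {S : Finset ι} {y : ι → K} {i : ι}
    (hy : ∀ x ∈ C, ∑ j, x j * y j = 0) (hyi : y i ≠ 0) (hyS : ∀ j ≠ i, y j ≠ 0 → j ∈ S) :
    shortening C (insert i S) = shortening C S := by
  ext x
  simp only [mem_shortening, forall_mem_insert]
  refine and_congr_right fun hx => and_iff_right_of_imp fun hxS => ?_
  have hsum : ∑ j, x j * y j = x i * y i := by
    refine sum_eq_single_of_mem i (mem_univ i) fun j _ hji => ?_
    by_cases hyj : y j = 0
    · rw [hyj, mul_zero]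
    · rw [hxS j (hyS j hji hyj), zero_mul]
  exact (mul_eq_zero.mp (hsum.symm.trans (hy x hx))).resolve_right hyi

variable [DecidableEq K] {r : ℕ}

/-- The code `C` has locality `r`: each coordinate lies in the support of a vector of weight at
most `r + 1` orthogonal to `C`, so that the symbol there can be recovered from at most `r`
others. -/
def HasLocality (C : Submodule K (ι → K)) (r : ℕ) : Prop :=
  ∀ i, ∃ y : ι → K, (∀ x ∈ C, ∑ j, x j * y j = 0) ∧ hammingNorm y ≤ r + 1 ∧ y i ≠ 0

theorem HasLocality.exists_lt_finrank_shortening_add_card (hC : HasLocality C r) {S : Finset ι}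
    (hS : shortening C S ≠ ⊥) :
    ∃ T : Finset ι,
      finrank K (shortening C S) + #S < finrank K (shortening C T) + #T ∧
      finrank K (shortening C S) ≤ finrank K (shortening C T) + r := by
  classical
  obtain ⟨x, hx, hx0⟩ := Submodule.exists_mem_ne_zero_of_ne_bot hS
  obtain ⟨i, hxi⟩ := Function.ne_iff.mp hx0
  have hiS : i ∉ S := fun hi => hxi ((mem_shortening.mp hx).2 i hi)
  obtain ⟨y, hy, hweight, hyi⟩ := hC i
  let R : Finset ι := (univ.filter fun j => y j ≠ 0).erase i
  have hR : #R ≤ r := by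
    rw [card_erase_of_mem (by simpa using hyi)]
    exact Nat.sub_le_of_le_add hweight
  have hi : i ∉ S ∪ R := by simp [R, hiS]
  have hinsert : shortening C (insert i (S ∪ R)) = shortening C (S ∪ R) :=
    shortening_insert_eq_of_dual hy hyi fun j hji hyj => by simp [R, hji, hyj]
  have hmono : finrank K (shortening C S) + #S ≤ finrank K (shortening C (S ∪ R)) + #(S ∪ R) :=
    monotone_finrank_shortening_add_card C subset_union_left
  have hdrop := finrank_le_finrank_shortening_add_card (shortening C S) R
  rw [shortening_shortening] at hdrop
  refine ⟨insert i (S ∪ R), ?_, ?_⟩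
  · rw [hinsert, card_insert_of_notMem hi]
    omega
  · rw [hinsert]
    omega

theorem HasLocality.exists_finrank_add_le_finrank_shortening_add_card (hC : HasLocality C r) {t : ℕ}
    (ht : t * r < finrank K C) :
    ∃ S : Finset ι,
      finrank K C + t ≤ finrank K (shortening C S) + #S ∧
      finrank K C ≤ finrank K (shortening C S) + t * r := by
  induction t with
  | zero => exact ⟨∅, by rw [shortening_empty]; simp⟩
  | succ t ih =>
    rw [Nat.succ_mul] at ht ⊢
    obtain ⟨S, hS, hdim⟩ := ih (by omega)
    have hS_ne : shortening C S ≠ ⊥ := Submodule.one_le_finrank_iff.mp (by omega)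
    obtain ⟨T, hT, hdim'⟩ := hC.exists_lt_finrank_shortening_add_card hS_ne
    exact ⟨T, by omega, by omega⟩

theorem HasLocality.exists_hammingNorm_add_le (hC : HasLocality C r) {t : ℕ}
    (ht : t * r < finrank K C) :
    ∃ x ∈ C, x ≠ 0 ∧ hammingNorm x + (finrank K C + t) ≤ Fintype.card ι + 1 := by
  obtain ⟨S, hS, hdim⟩ := hC.exists_finrank_add_le_finrank_shortening_add_card ht
  have hS_ne : shortening C S ≠ ⊥ := Submodule.one_le_finrank_iff.mp (by omega)
  obtain ⟨x, hx, hx0, hweight⟩ := exists_hammingNorm_add_finrank_shortening_add_card_le hS_ne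
  exact ⟨x, hx, hx0, by omega⟩

theorem lrc_singleton_bound_general (hr : 0 < r) (hC : HasLocality C r) (hC0 : C ≠ ⊥) :
    ∃ x ∈ C, x ≠ 0 ∧ (hammingNorm x : ℤ) ≤
      (Fintype.card ι : ℤ) - (finrank K C : ℤ) - ⌈(finrank K C : ℚ) / (r : ℚ)⌉ + 2 := by
  have hr' : (0 : ℚ) < r := Nat.cast_pos.mpr hr
  have hk : (0 : ℚ) < finrank K C := Nat.cast_pos.mpr (Submodule.one_le_finrank_iff.mpr hC0)
  obtain ⟨t, ht⟩ : ∃ t, ⌈(finrank K C : ℚ) / r⌉₊ = t + 1 :=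
    Nat.exists_eq_add_one.mpr (Nat.ceil_pos.mpr (div_pos hk hr'))
  have htr : t * r < finrank K C := by
    have h : (t : ℚ) < finrank K C / r := Nat.lt_ceil.mp (ht ▸ t.lt_succ_self)
    exact_mod_cast (lt_div_iff₀ hr').mp h
  obtain ⟨x, hx, hx0, hweight⟩ := hC.exists_hammingNorm_add_le htr
  refine ⟨x, hx, hx0, ?_⟩
  rw [← Int.natCast_ceil_eq_ceil (div_pos hk hr').le, ht]
  omega

end Locality

/-- Singleton-type bound for locally repairable codes:
`d ≤ n - k - ⌈k/r⌉ + 2`. -/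
theorem lrc_singleton_bound
    (F : Type*) [Field F] [Fintype F] [DecidableEq F]
    (n k d r : ℕ) (hr : 0 < r)
    (C : Submodule F (Fin n → F))
    (hk : Module.finrank F C = k)
    -- locality `r`: every coordinate is in the support of a dual codeword of
    -- Hamming weight at most `r + 1`
    (hloc : ∀ i : Fin n, ∃ y : Fin n → F,
        (∀ x ∈ C, ∑ j, x j * y j = 0) ∧ hammingNorm y ≤ r + 1 ∧ y i ≠ 0)
    -- `d` is the minimum Hamming distance of `C`
    (hd : ∀ x ∈ C, x ≠ 0 → d ≤ hammingNorm x)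
    (hd' : ∃ x ∈ C, x ≠ 0 ∧ hammingNorm x = d) :
    (d : ℤ) ≤ (n : ℤ) - (k : ℤ) - ⌈(k : ℚ) / (r : ℚ)⌉ + 2 := by
  obtain ⟨x₀, hx₀, hx₀_ne, -⟩ := hd'
  obtain ⟨x, hx, hx_ne, hweight⟩ :=
    lrc_singleton_bound_general hr hloc ((Submodule.ne_bot_iff C).mpr ⟨x₀, hx₀, hx₀_ne⟩)
  rw [hk, Fintype.card_fin] at hweight
  exact (Nat.cast_le.mpr (hd x hx hx_ne)).trans hweight
end

section
/- Let C be a binary linear code of length n with locality r (every coordinate is in the support of a dual codeword of weight exactly r+1). Then there exists a linearly independent set of dual codewords, each of Hamming weight r+1, the union of whose supports equals {1,...,n}. -/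
/-!
A maximal linearly independent subset of a set of parity checks spans the same subspace. If no
member of the subset covers a coordinate, then the projection to that coordinate vanishes on this
span, so no parity check of the original set covers it either.
-/

open Submodule

theorem exists_mem_span_map_ne_zero_iff {R M N : Type*} [Semiring R] [AddCommMonoid M]
    [AddCommMonoid N] [Module R M] [Module R N] (f : M →ₗ[R] N) (s : Set M) :
    (∃ x ∈ span R s, f x ≠ 0) ↔ ∃ x ∈ s, f x ≠ 0 := by
  contrapose!
  exact LinearMap.eqOn_span_iff (g := 0)

theorem exists_subset_linearIndepOn_id_forall_exists_map_ne_zero_iff {K V W : Type*}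
    [DivisionRing K] [AddCommGroup V] [AddCommMonoid W] [Module K V] [Module K W] (P : Set V) :
    ∃ S ⊆ P, LinearIndepOn K id S ∧
      ∀ f : V →ₗ[K] W, (∃ y ∈ S, f y ≠ 0) ↔ ∃ y ∈ P, f y ≠ 0 := by
  obtain ⟨S, hSP, hspan, hS⟩ := exists_linearIndependent K P
  refine ⟨S, hSP, hS, fun f ↦ ?_⟩
  calc (∃ y ∈ S, f y ≠ 0)
      ↔ ∃ y ∈ span K S, f y ≠ 0 := (exists_mem_span_map_ne_zero_iff f S).symm
    _ ↔ ∃ y ∈ span K P, f y ≠ 0 := by rw [hspan]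
    _ ↔ ∃ y ∈ P, f y ≠ 0 := exists_mem_span_map_ne_zero_iff f P

theorem exists_linearIndependent_parity_checks_covering_general {K ι : Type*} [DivisionRing K]
    (P : Set (ι → K)) (hP : ∀ i, ∃ y ∈ P, y i ≠ 0) :
    ∃ S ⊆ P, LinearIndepOn K id S ∧ ∀ i, ∃ y ∈ S, y i ≠ 0 := by
  obtain ⟨S, hSP, hS, hcover⟩ :=
    exists_subset_linearIndepOn_id_forall_exists_map_ne_zero_iff (K := K) (W := K) P
  exact ⟨S, hSP, hS, fun i ↦ (hcover (LinearMap.proj i)).mpr (hP i)⟩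

/-- For a binary linear code with locality `r`, there is a linearly
independent set of weight-`(r+1)` dual codewords whose supports cover all
coordinates. -/
theorem exists_linearIndependent_parity_checks_covering
    (n r : ℕ) (C : Submodule (ZMod 2) (Fin n → ZMod 2))
    (hloc : ∀ i : Fin n, ∃ y : Fin n → ZMod 2,
        (∀ x ∈ C, ∑ j, x j * y j = 0) ∧ hammingNorm y = r + 1 ∧ y i ≠ 0) :
    ∃ S : Finset (Fin n → ZMod 2),
      (∀ y ∈ S, (∀ x ∈ C, ∑ j, x j * y j = 0) ∧ hammingNorm y = r + 1) ∧
      LinearIndependent (ZMod 2) (fun y : S => (y : Fin n → ZMod 2)) ∧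
      (∀ i : Fin n, ∃ y ∈ S, y i ≠ 0) := by
  obtain ⟨S, hSP, hS, hcover⟩ := exists_linearIndependent_parity_checks_covering_general
    {y | (∀ x ∈ C, ∑ j, x j * y j = 0) ∧ hammingNorm y = r + 1}
    (by simpa only [Set.mem_ofPred_eq, and_assoc] using hloc)
  lift S to Finset (Fin n → ZMod 2) using S.toFinite
  exact ⟨S, hSP, hS, hcover⟩
end
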